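/- The function Ψ₆(τ) = P₀(τ)³ − 9P₀(τ)(P₁(τ)² + P₂(τ)² + P₃(τ)² − 4P₄(τ)²) + 54P₁(τ)P₂(τ)P₃(τ) is a Siegel modular form of weight 6 for Sp(4,ℤ): for every matrix M = (A B; C D) ∈ Sp(4,ℤ) (written in 2×2 blocks) and every τ ∈ H₂, the matrix Cτ+D is invertible, (Aτ+B)(Cτ+D)⁻¹ ∈ H₂, and Ψ₆((Aτ+B)(Cτ+D)⁻¹) = det(Cτ+D)⁶ · Ψ₆(τ). -/

import Mathlib

open scoped BigOperators

namespace TwoLoop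

/-- 2×2 complex matrices. -/
abbrev Mat2 := Matrix (Fin 2) (Fin 2) ℂ

/-- The genus-2 Siegel upper half space: symmetric 2×2 complex matrices with
positive definite imaginary part. -/
def SiegelH2 : Set Mat2 := {τ | τ.transpose = τ ∧ (τ.map Complex.im).PosDef}

/-- A (half-integer) theta characteristic `[a;b]`, recorded by its rows `a, b ∈ {0,1}²`. -/
abbrev Char := (Fin 2 → ℤ) × (Fin 2 → ℤ)

/-- The theta constant `θ[a;b](τ) = Σ_{n ∈ ℤ²} exp(πi (n+a/2)ᵀ τ (n+a/2) + πi (n+a/2)·b)`. -/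
noncomputable def theta (κ : Char) (τ : Mat2) : ℂ :=
  ∑' n : Fin 2 → ℤ,
    Complex.exp ((Real.pi : ℂ) * Complex.I *
      ((∑ i, ∑ j, ((n i : ℂ) + (κ.1 i : ℂ) / 2) * τ i j * ((n j : ℂ) + (κ.1 j : ℂ) / 2))
        + ∑ i, ((n i : ℂ) + (κ.1 i : ℂ) / 2) * (κ.2 i : ℂ)))

/-- The ten even characteristics δ₁,…,δ₁₀. -/
def δev : Fin 10 → Char :=
  ![(![0,0], ![0,0]), (![0,0], ![0,1]), (![0,0], ![1,0]), (![0,0], ![1,1]),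
    (![0,1], ![0,0]), (![0,1], ![1,0]), (![1,0], ![0,0]), (![1,0], ![0,1]),
    (![1,1], ![0,0]), (![1,1], ![1,1])]

/-- The six odd characteristics ν₁,…,ν₆. -/
def νodd : Fin 6 → Char :=
  ![(![0,1], ![0,1]), (![1,0], ![1,0]), (![0,1], ![1,1]),
    (![1,0], ![1,1]), (![1,1], ![0,1]), (![1,1], ![1,0])]

/-- `Θ[ε](τ) = θ[ε;0](2τ)`. -/
noncomputable def Θf (ε : Fin 2 → ℤ) (τ : Mat2) : ℂ := theta (ε, ![0,0]) ((2 : ℂ) • τ)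

noncomputable def P0 (τ : Mat2) : ℂ :=
  Θf ![0,0] τ ^ 4 + Θf ![0,1] τ ^ 4 + Θf ![1,0] τ ^ 4 + Θf ![1,1] τ ^ 4
noncomputable def P1 (τ : Mat2) : ℂ :=
  2 * (Θf ![0,0] τ ^ 2 * Θf ![0,1] τ ^ 2 + Θf ![1,0] τ ^ 2 * Θf ![1,1] τ ^ 2)
noncomputable def P2 (τ : Mat2) : ℂ :=
  2 * (Θf ![0,0] τ ^ 2 * Θf ![1,0] τ ^ 2 + Θf ![0,1] τ ^ 2 * Θf ![1,1] τ ^ 2)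
noncomputable def P3 (τ : Mat2) : ℂ :=
  2 * (Θf ![0,0] τ ^ 2 * Θf ![1,1] τ ^ 2 + Θf ![0,1] τ ^ 2 * Θf ![1,0] τ ^ 2)
noncomputable def P4 (τ : Mat2) : ℂ :=
  4 * (Θf ![0,0] τ * Θf ![0,1] τ * Θf ![1,0] τ * Θf ![1,1] τ)

/-- The vector `(P₀,…,P₄)`. -/
noncomputable def Pv : Fin 5 → Mat2 → ℂ := ![P0, P1, P2, P3, P4]

open MvPolynomial in
/-- The Igusa quartic as a polynomial in `x₀,…,x₄`. -/
noncomputable def I4poly : MvPolynomial (Fin 5) ℂ :=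
  X 4 ^ 4 + X 4 ^ 2 * X 0 ^ 2 - X 4 ^ 2 * X 1 ^ 2 - X 4 ^ 2 * X 2 ^ 2 - X 4 ^ 2 * X 3 ^ 2
    + X 1 ^ 2 * X 2 ^ 2 + X 1 ^ 2 * X 3 ^ 2 + X 2 ^ 2 * X 3 ^ 2
    - 2 * (X 0 * X 1 * X 2 * X 3)

/-- The signature `⟨κ|λ⟩ = exp(πi(a_κ·b_λ − b_κ·a_λ))`. -/
noncomputable def sig (κ lam : Char) : ℂ :=
  Complex.exp ((Real.pi : ℂ) * Complex.I *
    (((∑ i, κ.1 i * lam.2 i : ℤ) : ℂ) - ((∑ i, κ.2 i * lam.1 i : ℤ) : ℂ)))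

/-- Componentwise mod-2 sum of characteristics. -/
def addChar (κ lam : Char) : Char :=
  (fun i => (κ.1 i + lam.1 i) % 2, fun i => (κ.2 i + lam.2 i) % 2)

/-- For each even characteristic `δ_d`, the ordering `(k₁,…,k₆)` of `{1,…,6}` (0-indexed) whose
first three entries form the triad of odd characteristics with `δ_d = ν_{k₁}+ν_{k₂}+ν_{k₃}`
and whose last three are the complementary indices. -/
def triad : Fin 10 → Fin 6 → Fin 6 :=
  ![![0,3,5,1,2,4], ![0,1,5,2,3,4], ![0,1,4,2,3,5], ![0,3,4,1,2,5], ![0,1,3,2,4,5],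
    ![0,4,5,1,2,3], ![0,1,2,3,4,5], ![0,2,3,1,4,5], ![0,2,5,1,3,4], ![0,2,4,1,3,5]]

/-- D'Hoker–Phong's `Ξ₆[δ]`. -/
noncomputable def Xi6 (d : Fin 10) (τ : Mat2) : ℂ :=
  ∑ i : Fin 3, ∑ j : Fin 3,
    if i < j then
      sig (νodd (triad d (Fin.castLE (by norm_num) i))) (νodd (triad d (Fin.castLE (by norm_num) j))) *
        ∏ m : Fin 3,
          theta (addChar (addChar (νodd (triad d (Fin.castLE (by norm_num) i)))
              (νodd (triad d (Fin.castLE (by norm_num) j))))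
            (νodd (triad d (⟨m.1 + 3, by omega⟩ : Fin 6)))) τ ^ 4
    else 0

/-- The formal derivative `∂I₄/∂θ⁴[δ]` of the Igusa quartic with respect to the ten fourth
powers of the even theta constants, regarded as independent variables. -/
noncomputable def Dd (d : Fin 10) (τ : Mat2) : ℂ :=
  (1 / 48 : ℂ) *
    (theta (δev d) τ ^ 4 * (∑ d' : Fin 10, theta (δev d') τ ^ 8) - 4 * theta (δev d) τ ^ 12)

/-- `f_δ = 2Ξ₆[δ] − ∂I₄/∂θ⁴[δ]`. -/
noncomputable def fδ (d : Fin 10) (τ : Mat2) : ℂ := 2 * Xi6 d τ - Dd d τ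

/-- `Ψ₆`, the weight-6 modular form. -/
noncomputable def Ψ6 (τ : Mat2) : ℂ :=
  P0 τ ^ 3 - 9 * P0 τ * (P1 τ ^ 2 + P2 τ ^ 2 + P3 τ ^ 2 - 4 * P4 τ ^ 2)
    + 54 * (P1 τ * P2 τ * P3 τ)

/-- `Ψ₁₀`, the weight-10 modular form. -/
noncomputable def Ψ10 (τ : Mat2) : ℂ := ∏ d : Fin 10, theta (δev d) τ ^ 2

/-- A characteristic is even when `a·b` is even. -/
def IsEvenChar (κ : Char) : Prop := (∑ i, κ.1 i * κ.2 i) % 2 = 0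

/-- A characteristic is odd when `a·b` is odd. -/
def IsOddChar (κ : Char) : Prop := (∑ i, κ.1 i * κ.2 i) % 2 = 1

/-- The symplectic form `J = (0 I; −I 0)`. -/
def Jmat : Matrix (Fin 4) (Fin 4) ℤ := !![0,0,1,0; 0,0,0,1; -1,0,0,0; 0,-1,0,0]

/-- The symplectic group `Sp(4,ℤ)`. -/
def Sp4Z : Set (Matrix (Fin 4) (Fin 4) ℤ) := {M | M.transpose * Jmat * M = Jmat}

/-- Upper-left 2×2 block `A` of a 4×4 integer matrix, as a complex matrix. -/
def blkA (M : Matrix (Fin 4) (Fin 4) ℤ) : Mat2 :=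
  fun i j => ((M (⟨i.1, by omega⟩ : Fin 4) (⟨j.1, by omega⟩ : Fin 4) : ℤ) : ℂ)

/-- Upper-right 2×2 block `B`. -/
def blkB (M : Matrix (Fin 4) (Fin 4) ℤ) : Mat2 :=
  fun i j => ((M (⟨i.1, by omega⟩ : Fin 4) (⟨j.1 + 2, by omega⟩ : Fin 4) : ℤ) : ℂ)

/-- Lower-left 2×2 block `C`. -/
def blkC (M : Matrix (Fin 4) (Fin 4) ℤ) : Mat2 :=
  fun i j => ((M (⟨i.1 + 2, by omega⟩ : Fin 4) (⟨j.1, by omega⟩ : Fin 4) : ℤ) : ℂ)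

/-- Lower-right 2×2 block `D`. -/
def blkD (M : Matrix (Fin 4) (Fin 4) ℤ) : Mat2 :=
  fun i j => ((M (⟨i.1 + 2, by omega⟩ : Fin 4) (⟨j.1 + 2, by omega⟩ : Fin 4) : ℤ) : ℂ)

/-!
Multiplying on the left by elements of the two copies of `SL₂` acting on the symplectic planes and
of the Levi copy of `SL₂`, one clears the first column of a matrix in `Sp₄(ℤ)` below its top entry
and reaches the Siegel parabolic. Hence `Sp₄(ℤ)` is generated, as a monoid, by the images of
`S` and `T` under the Levi embedding and under the embedding in the first symplectic plane, and by
the cocycle relation of `det (Cτ + D)` modularity has to be checked for these four elements only.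

On the vector of second-order theta constants `Θ[00], Θ[01], Θ[10], Θ[11]` the two Levi generators
act by permutations, the translation by phases `1, 1, i, i`, and the inversion, by Poisson
summation in the first variable, by a Hadamard transform times a square root of `τ₀₀ / (2 i)`.
`Ψ₆` is a form of degree `12` in these four constants which is invariant under the permutations and
the phases and is multiplied by `-64` under the Hadamard matrix; as `-64 (τ₀₀ / (2 i))⁶ = τ₀₀⁶`,
this gives weight `6`.
-/

open Matrix Complex Real
open scoped ComplexOrder MatrixGroups

section SiegelAction

variable {n R : Type*} [Fintype n] [DecidableEq n] [CommRing R]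

/-- The numerator `Aτ + B` of the Siegel action of `M = (A B; C D)` on `τ`. -/
def moebiusNum (M : Matrix (n ⊕ n) (n ⊕ n) R) (τ : Matrix n n R) : Matrix n n R :=
  M.toBlocks₁₁ * τ + M.toBlocks₁₂

/-- The factor of automorphy `Cτ + D` of the Siegel action of `M = (A B; C D)` on `τ`. -/
def moebiusDenom (M : Matrix (n ⊕ n) (n ⊕ n) R) (τ : Matrix n n R) : Matrix n n R :=
  M.toBlocks₂₁ * τ + M.toBlocks₂₂

/-- The Siegel action `(Aτ + B)(Cτ + D)⁻¹` of `M = (A B; C D)` on `τ`, with junk value `0` when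
`Cτ + D` is singular. -/
noncomputable def moebius (M : Matrix (n ⊕ n) (n ⊕ n) R) (τ : Matrix n n R) : Matrix n n R :=
  moebiusNum M τ * (moebiusDenom M τ)⁻¹

lemma moebius_mul_moebiusDenom {M : Matrix (n ⊕ n) (n ⊕ n) R} {τ : Matrix n n R}
    (h : IsUnit (moebiusDenom M τ)) : moebius M τ * moebiusDenom M τ = moebiusNum M τ :=
  nonsing_inv_mul_cancel_right _ _ ((isUnit_iff_isUnit_det _).1 h)

lemma moebiusNum_mul (M : Matrix (n ⊕ n) (n ⊕ n) R) {N : Matrix (n ⊕ n) (n ⊕ n) R}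
    {τ : Matrix n n R} (hN : IsUnit (moebiusDenom N τ)) :
    moebiusNum (M * N) τ = moebiusNum M (moebius N τ) * moebiusDenom N τ := by
  rw [moebiusNum, moebiusNum, Matrix.add_mul, Matrix.mul_assoc, moebius_mul_moebiusDenom hN,
    moebiusNum, moebiusDenom, ← fromBlocks_toBlocks M, ← fromBlocks_toBlocks N,
    fromBlocks_multiply]
  simp only [toBlocks_fromBlocks₁₁, toBlocks_fromBlocks₁₂, toBlocks_fromBlocks₂₁,
    toBlocks_fromBlocks₂₂]
  noncomm_ring

lemma moebiusDenom_mul (M : Matrix (n ⊕ n) (n ⊕ n) R) {N : Matrix (n ⊕ n) (n ⊕ n) R}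
    {τ : Matrix n n R} (hN : IsUnit (moebiusDenom N τ)) :
    moebiusDenom (M * N) τ = moebiusDenom M (moebius N τ) * moebiusDenom N τ := by
  rw [moebiusDenom, moebiusDenom.eq_1 M, Matrix.add_mul, Matrix.mul_assoc,
    moebius_mul_moebiusDenom hN, moebiusNum, moebiusDenom, ← fromBlocks_toBlocks M,
    ← fromBlocks_toBlocks N, fromBlocks_multiply]
  simp only [toBlocks_fromBlocks₁₁, toBlocks_fromBlocks₁₂, toBlocks_fromBlocks₂₁,
    toBlocks_fromBlocks₂₂]
  noncomm_ring

lemma moebius_mul (M : Matrix (n ⊕ n) (n ⊕ n) R) {N : Matrix (n ⊕ n) (n ⊕ n) R}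
    {τ : Matrix n n R} (hN : IsUnit (moebiusDenom N τ)) :
    moebius (M * N) τ = moebius M (moebius N τ) := by
  rw [moebius, moebiusNum_mul M hN, moebiusDenom_mul M hN, Matrix.mul_inv_rev,
    ← Matrix.mul_assoc, mul_nonsing_inv_cancel_right _ _ ((isUnit_iff_isUnit_det _).1 hN)]
  rfl

lemma moebiusDenom_transpose_mul_moebiusNum_sub {M : Matrix (n ⊕ n) (n ⊕ n) R}
    (hM : M ∈ symplecticGroup n R) (σ τ : Matrix n n R) :
    (moebiusDenom M σ)ᵀ * moebiusNum M τ - (moebiusNum M σ)ᵀ * moebiusDenom M τ = τ - σᵀ := by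
  obtain ⟨hAC, hBD, hAD⟩ :=
    SymplecticGroup.fromBlocks_mem_iff.1 ((fromBlocks_toBlocks M).symm ▸ hM)
  have hDA : M.toBlocks₂₂ᵀ * M.toBlocks₁₁ - M.toBlocks₁₂ᵀ * M.toBlocks₂₁ = 1 := by
    simpa only [transpose_sub, transpose_mul, transpose_transpose, transpose_one] using
      congr_arg transpose hAD
  have expand : (moebiusDenom M σ)ᵀ * moebiusNum M τ - (moebiusNum M σ)ᵀ * moebiusDenom M τ =
      (M.toBlocks₂₂ᵀ * M.toBlocks₁₁ - M.toBlocks₁₂ᵀ * M.toBlocks₂₁) * τ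
        - σᵀ * (M.toBlocks₁₁ᵀ * M.toBlocks₂₂ - M.toBlocks₂₁ᵀ * M.toBlocks₁₂)
        - σᵀ * (M.toBlocks₁₁ᵀ * M.toBlocks₂₁ - M.toBlocks₂₁ᵀ * M.toBlocks₁₁) * τ
        - (M.toBlocks₁₂ᵀ * M.toBlocks₂₂ - M.toBlocks₂₂ᵀ * M.toBlocks₁₂) := by
    simp only [moebiusNum, moebiusDenom, transpose_add, transpose_mul]
    noncomm_ring
  rw [expand, hAC, hBD, hAD, hDA]
  simp

lemma transpose_moebius {M : Matrix (n ⊕ n) (n ⊕ n) R} (hM : M ∈ symplecticGroup n R)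
    {τ : Matrix n n R} (hτ : τᵀ = τ) (h : IsUnit (moebiusDenom M τ)) :
    (moebius M τ)ᵀ = moebius M τ := by
  have hpair := moebiusDenom_transpose_mul_moebiusNum_sub hM τ τ
  rw [hτ, sub_self, sub_eq_zero, ← moebius_mul_moebiusDenom h, transpose_mul,
    ← Matrix.mul_assoc] at hpair
  have hT : IsUnit (moebiusDenom M τ)ᵀ := (isUnit_transpose _).2 h
  exact (hT.mul_right_injective <| h.mul_left_injective <| by
    simpa only [Matrix.mul_assoc] using hpair).symm

lemma moebiusDenom_conjTranspose_mul_moebiusNum_sub [StarRing R]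
    {M : Matrix (n ⊕ n) (n ⊕ n) R} (hM : M ∈ symplecticGroup n R) (hMstar : M.map star = M)
    (τ : Matrix n n R) :
    (moebiusDenom M τ)ᴴ * moebiusNum M τ - (moebiusNum M τ)ᴴ * moebiusDenom M τ = τ - τᴴ := by
  have hentry (i j) : star (M i j) = M i j := congr_fun₂ hMstar i j
  have hnum : moebiusNum M (τ.map star) = (moebiusNum M τ).map star := by
    ext i j
    simp [moebiusNum, mul_apply, toBlocks₁₁, toBlocks₁₂, hentry, mul_comm]
  have hdenom : moebiusDenom M (τ.map star) = (moebiusDenom M τ).map star := by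
    ext i j
    simp [moebiusDenom, mul_apply, toBlocks₂₁, toBlocks₂₂, hentry, mul_comm]
  simpa only [hnum, hdenom, conjTranspose, transpose_map] using
    moebiusDenom_transpose_mul_moebiusNum_sub hM (τ.map star) τ

end SiegelAction

section SiegelUpperHalfSpace

variable {n : Type*}

/-- The Siegel upper half space of symmetric complex matrices with positive definite imaginary
part. For `n = Fin 2` it is definitionally `SiegelH2`. -/
def siegelUpperHalfSpace (n : Type*) : Set (Matrix n n ℂ) :=
  {τ | τ.transpose = τ ∧ (τ.map im).PosDef}

lemma two_I_smul_map_im {τ : Matrix n n ℂ} (hτ : τᵀ = τ) :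
    (2 * I) • (τ.map im).map ofReal = τ - τᴴ := by
  ext i j
  have hij : τ j i = τ i j := congr_fun₂ hτ i j
  simp [hij, Complex.ext_iff]
  ring

variable [Fintype n]

lemma star_dotProduct_map_ofReal_mulVec {Y : Matrix n n ℝ} (hY : Y.IsHermitian) (v : n → ℂ) :
    star v ⬝ᵥ Y.map ofReal *ᵥ v =
      ((re ∘ v) ⬝ᵥ Y *ᵥ (re ∘ v) + (im ∘ v) ⬝ᵥ Y *ᵥ (im ∘ v) : ℝ) := by
  have hreal (x y : n → ℝ) :
      (ofReal ∘ x) ⬝ᵥ Y.map ofReal *ᵥ (ofReal ∘ y) = ofReal (x ⬝ᵥ Y *ᵥ y) := by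
    simp [dotProduct, mulVec]
  have hsymm : (im ∘ v) ⬝ᵥ Y *ᵥ (re ∘ v) = (re ∘ v) ⬝ᵥ Y *ᵥ (im ∘ v) := by
    rw [dotProduct_mulVec, ← mulVec_transpose, ← conjTranspose_eq_transpose_of_trivial, hY.eq,
      dotProduct_comm]
  have hv : v = ofReal ∘ (re ∘ v) + I • (ofReal ∘ (im ∘ v)) := by
    ext i
    simp [mul_comm I]
  have hstar : star v = ofReal ∘ (re ∘ v) - I • (ofReal ∘ (im ∘ v)) := by
    ext i
    simp [Complex.ext_iff]
  rw [hstar]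
  nth_rewrite 3 [hv]
  simp only [mulVec_add, mulVec_smul, sub_dotProduct, dotProduct_add, smul_dotProduct,
    dotProduct_smul, hreal, hsymm, smul_eq_mul, ofReal_add]
  linear_combination -((im ∘ v) ⬝ᵥ Y *ᵥ (im ∘ v) : ℝ) * I_mul_I

lemma posDef_map_ofReal_iff {n : Type*} [Finite n] {Y : Matrix n n ℝ} :
    (Y.map ofReal).PosDef ↔ Y.PosDef := by
  cases nonempty_fintype n
  have hherm : (Y.map ofReal).IsHermitian ↔ Y.IsHermitian := by
    simp [IsHermitian, ← Matrix.ext_iff]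
  refine ⟨fun h => .of_dotProduct_mulVec_pos (hherm.1 h.1) fun x hx => ?_,
    fun h => .of_dotProduct_mulVec_pos (hherm.2 h.1) fun v hv => ?_⟩
  · have hx' : (ofReal ∘ x : n → ℂ) ≠ 0 := fun h0 => hx <| funext fun i => by
      simpa using congr_fun h0 i
    have hpos := h.dotProduct_mulVec_pos hx'
    rw [star_dotProduct_map_ofReal_mulVec (hherm.1 h.1)] at hpos
    simpa [Function.comp_def, ← Pi.zero_def] using hpos
  · rw [star_dotProduct_map_ofReal_mulVec h.1, zero_lt_real]
    have hnonneg (x : n → ℝ) : 0 ≤ x ⬝ᵥ Y *ᵥ x := h.posSemidef.dotProduct_mulVec_nonneg x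
    have hpos (x : n → ℝ) (hx : x ≠ 0) : 0 < x ⬝ᵥ Y *ᵥ x := h.dotProduct_mulVec_pos hx
    by_cases hre : re ∘ v = 0
    · refine add_pos_of_nonneg_of_pos (hnonneg _) (hpos _ fun him => hv <| funext fun i => ?_)
      exact Complex.ext (congr_fun hre i) (congr_fun him i)
    · exact add_pos_of_pos_of_nonneg (hpos _ hre) (hnonneg _)

variable [DecidableEq n]

lemma isUnit_moebiusDenom {M : Matrix (n ⊕ n) (n ⊕ n) ℂ} (hM : M ∈ symplecticGroup n ℂ)
    (hMstar : M.map star = M) {τ : Matrix n n ℂ} (hτ : τ ∈ siegelUpperHalfSpace n) :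
    IsUnit (moebiusDenom M τ) := by
  refine mulVec_injective_iff_isUnit.1 <|
    (injective_iff_map_eq_zero (moebiusDenom M τ).mulVecLin).2 fun v hv => ?_
  rw [mulVecLin_apply] at hv
  by_contra hv0
  have hpos := (posDef_map_ofReal_iff.2 hτ.2).dotProduct_mulVec_pos hv0
  have hzero : (2 * I) * (star v ⬝ᵥ (τ.map im).map ofReal *ᵥ v) = 0 := by
    rw [← smul_eq_mul, ← dotProduct_smul, ← smul_mulVec, two_I_smul_map_im hτ.1,
      ← moebiusDenom_conjTranspose_mul_moebiusNum_sub hM hMstar, sub_mulVec,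
      ← mulVec_mulVec, ← mulVec_mulVec, hv, mulVec_zero, sub_zero, dotProduct_mulVec,
      ← star_mulVec, hv, star_zero, zero_dotProduct]
  exact hpos.ne' <| by simpa using hzero

lemma moebius_mem_siegelUpperHalfSpace {M : Matrix (n ⊕ n) (n ⊕ n) ℂ}
    (hM : M ∈ symplecticGroup n ℂ) (hMstar : M.map star = M) {τ : Matrix n n ℂ}
    (hτ : τ ∈ siegelUpperHalfSpace n) : moebius M τ ∈ siegelUpperHalfSpace n := by
  have hunit := isUnit_moebiusDenom hM hMstar hτ
  have hsymm := transpose_moebius hM hτ.1 hunit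
  have hconj : (moebiusDenom M τ)ᴴ * ((moebius M τ).map im).map ofReal * moebiusDenom M τ =
      (τ.map im).map ofReal := by
    have h2I : (2 * I : ℂ) ≠ 0 := by simp
    refine smul_right_injective _ h2I ?_
    simp only
    rw [← Matrix.smul_mul, ← Matrix.mul_smul, two_I_smul_map_im hsymm, two_I_smul_map_im hτ.1,
      ← moebiusDenom_conjTranspose_mul_moebiusNum_sub hM hMstar τ,
      ← moebius_mul_moebiusDenom hunit,
      conjTranspose_mul]
    noncomm_ring
  refine ⟨hsymm, posDef_map_ofReal_iff.1 <| hunit.posDef_star_left_conjugate_iff.1 ?_⟩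
  rw [star_eq_conjTranspose, hconj]
  exact posDef_map_ofReal_iff.2 hτ.2

end SiegelUpperHalfSpace

section SymplecticElements

variable {n R : Type*} [Fintype n] [DecidableEq n] [CommRing R]

/-- The unipotent matrix `(1 S; 0 1)`, acting on the Siegel upper half space by `τ ↦ τ + S`. -/
def translation (S : Matrix n n R) : Matrix (n ⊕ n) (n ⊕ n) R := fromBlocks 1 S 0 1

/-- The Levi embedding `U ↦ (U 0; 0 U⁻ᵀ)`, acting on the Siegel upper half space by
`τ ↦ U τ Uᵀ`. -/
def levi : Matrix.SpecialLinearGroup n R →* Matrix (n ⊕ n) (n ⊕ n) R where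
  toFun U := fromBlocks U 0 0 (U⁻¹ : Matrix.SpecialLinearGroup n R)ᵀ
  map_one' := by simp
  map_mul' U V := by simp [fromBlocks_multiply, -Matrix.SpecialLinearGroup.coe_inv]

/-- The embedding of `SL₂(R)ⁿ` that lets the `i`-th factor act on the `i`-th symplectic plane of
`R²ⁿ`. -/
def diagonalSL2 : (n → SL(2, R)) →* Matrix (n ⊕ n) (n ⊕ n) R where
  toFun g := fromBlocks (diagonal fun i => g i 0 0) (diagonal fun i => g i 0 1)
    (diagonal fun i => g i 1 0) (diagonal fun i => g i 1 1)
  map_one' := by simp [← Pi.one_def, ← Pi.zero_def]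
  map_mul' g h := by simp [fromBlocks_multiply, mul_apply, Fin.sum_univ_two]

lemma levi_mem_symplecticGroup (U : Matrix.SpecialLinearGroup n R) :
    levi U ∈ symplecticGroup n R := by
  have hU : (U : Matrix n n R)ᵀ * ((U⁻¹ : Matrix.SpecialLinearGroup n R) : Matrix n n R)ᵀ = 1 := by
    rw [← transpose_mul, ← Matrix.SpecialLinearGroup.coe_mul, inv_mul_cancel,
      Matrix.SpecialLinearGroup.coe_one, transpose_one]
  exact SymplecticGroup.fromBlocks_mem_iff.2 ⟨by simp, by simp, by simpa using hU⟩

lemma diagonalSL2_mem_symplecticGroup (g : n → SL(2, R)) :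
    diagonalSL2 g ∈ symplecticGroup n R := by
  refine SymplecticGroup.fromBlocks_mem_iff.2 ⟨?_, ?_, ?_⟩
  · simp [mul_comm]
  · simp [mul_comm]
  · have hdet (i : n) : g i 0 0 * g i 1 1 - g i 1 0 * g i 0 1 = 1 := by
      rw [mul_comm (g i 1 0), ← det_fin_two, Matrix.SpecialLinearGroup.det_coe]
    simp [hdet]

lemma translation_add (S T : Matrix n n R) :
    translation (S + T) = translation S * translation T := by
  simp [translation, fromBlocks_multiply, add_comm]

lemma translation_mul_mul_transpose (U : Matrix.SpecialLinearGroup n R) (S : Matrix n n R) :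
    translation ((U : Matrix n n R) * S * (U : Matrix n n R)ᵀ) =
      levi U * translation S * levi U⁻¹ := by
  have hU : (U : Matrix n n R) * ((U⁻¹ : Matrix.SpecialLinearGroup n R) : Matrix n n R) = 1 := by
    rw [← Matrix.SpecialLinearGroup.coe_mul, mul_inv_cancel, Matrix.SpecialLinearGroup.coe_one]
  have hU' : ((U⁻¹ : Matrix.SpecialLinearGroup n R) : Matrix n n R)ᵀ * (U : Matrix n n R)ᵀ = 1 := by
    rw [← transpose_mul, hU, transpose_one]
  simp [translation, levi, fromBlocks_multiply, hU, hU', -Matrix.SpecialLinearGroup.coe_inv]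

lemma translation_diagonal (d : n → R) :
    translation (diagonal d) =
      diagonalSL2 fun i => ⟨!![1, d i; 0, 1], by simp⟩ := by
  simp [translation, diagonalSL2, ← Pi.one_def, ← Pi.zero_def]

lemma eq_translation_mul_levi {M : Matrix (n ⊕ n) (n ⊕ n) R} (hM : M ∈ symplecticGroup n R)
    (hC : M.toBlocks₂₁ = 0) (hA : M.toBlocks₁₁.det = 1) :
    ∃ S : Matrix n n R, Sᵀ = S ∧ M = translation S * levi ⟨M.toBlocks₁₁, hA⟩ := by
  obtain ⟨-, hBD, hAD⟩ :=
    SymplecticGroup.fromBlocks_mem_iff.1 ((fromBlocks_toBlocks M).symm ▸ hM)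
  rw [hC, transpose_zero, Matrix.zero_mul, sub_zero] at hAD
  have hDA : M.toBlocks₂₂ * M.toBlocks₁₁ᵀ = 1 := mul_eq_one_comm.1 hAD
  have hAD' : M.toBlocks₁₁ * M.toBlocks₂₂ᵀ = 1 := by
    simpa using congr_arg transpose hDA
  let U : Matrix.SpecialLinearGroup n R := ⟨M.toBlocks₁₁, hA⟩
  have hD : ((U⁻¹ : Matrix.SpecialLinearGroup n R) : Matrix n n R)ᵀ = M.toBlocks₂₂ := by
    have hinv : (U⁻¹ : Matrix.SpecialLinearGroup n R) * M.toBlocks₁₁ = 1 := by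
      rw [← Matrix.SpecialLinearGroup.coe_one, ← inv_mul_cancel U,
        Matrix.SpecialLinearGroup.coe_mul]
    rw [left_inv_eq_right_inv hinv hAD', transpose_transpose]
  refine ⟨M.toBlocks₁₂ * M.toBlocks₁₁ᵀ, ?_, ?_⟩
  · calc (M.toBlocks₁₂ * M.toBlocks₁₁ᵀ)ᵀ
        = M.toBlocks₁₁ * M.toBlocks₁₂ᵀ * (M.toBlocks₂₂ * M.toBlocks₁₁ᵀ) := by
          rw [hDA, transpose_mul, transpose_transpose, Matrix.mul_one]
      _ = M.toBlocks₁₁ * (M.toBlocks₁₂ᵀ * M.toBlocks₂₂) * M.toBlocks₁₁ᵀ := by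
          simp only [Matrix.mul_assoc]
      _ = M.toBlocks₁₁ * M.toBlocks₂₂ᵀ * (M.toBlocks₁₂ * M.toBlocks₁₁ᵀ) := by
          rw [hBD]
          simp only [Matrix.mul_assoc]
      _ = M.toBlocks₁₂ * M.toBlocks₁₁ᵀ := by rw [hAD', Matrix.one_mul]
  · calc M = fromBlocks M.toBlocks₁₁ M.toBlocks₁₂ M.toBlocks₂₁ M.toBlocks₂₂ :=
          (fromBlocks_toBlocks M).symm
      _ = fromBlocks M.toBlocks₁₁ (M.toBlocks₁₂ * M.toBlocks₁₁ᵀ * M.toBlocks₂₂) 0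
            M.toBlocks₂₂ := by rw [hC, Matrix.mul_assoc, hAD, Matrix.mul_one]
      _ = translation (M.toBlocks₁₂ * M.toBlocks₁₁ᵀ) * levi U := by
          simp [translation, levi, fromBlocks_multiply, hD, U,
            -Matrix.SpecialLinearGroup.coe_inv]

end SymplecticElements

section SymplecticGeneration

lemma mem_of_map_mul_mem {G N : Type*} [Group G] [Monoid N] {K : Submonoid N} {f : G →* N}
    (hf : ∀ g, f g ∈ K) {g : G} {M : N} (h : f g * M ∈ K) : M ∈ K := by
  have hM : f g⁻¹ * (f g * M) = M := by
    rw [← mul_assoc, ← map_mul, inv_mul_cancel, map_one, one_mul]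
  exact hM ▸ mul_mem (hf g⁻¹) h

variable {R : Type*} [CommRing R]

lemma exists_SL2_annihilating [IsDomain R] [IsBezout R] (a c : R) :
    ∃ g : SL(2, R), g 1 0 * a + g 1 1 * c = 0 := by
  obtain ⟨d, hd⟩ := IsBezout.span_pair_isPrincipal a c
  have hspan : Ideal.span {a, c} = Ideal.span {d} := hd
  obtain ⟨x, y, hxy⟩ := Ideal.mem_span_pair.1 (hspan ▸ Ideal.mem_span_singleton_self d)
  obtain ⟨a', ha⟩ : d ∣ a := Ideal.mem_span_singleton.1 (hspan ▸ Ideal.subset_span (by simp))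
  obtain ⟨c', hc⟩ : d ∣ c := Ideal.mem_span_singleton.1 (hspan ▸ Ideal.subset_span (by simp))
  rcases eq_or_ne d 0 with rfl | hd0
  · exact ⟨1, by simp [ha, hc]⟩
  · have hdet : x * a' + y * c' = 1 := mul_left_cancel₀ hd0 <| by
      linear_combination hxy - x * ha - y * hc
    refine ⟨⟨!![x, y; -c', a'], by rw [det_fin_two_of]; linear_combination hdet⟩, ?_⟩
    simp only [of_apply, cons_val', cons_val_zero, cons_val_one, cons_val_fin_one]
    rw [ha, hc]
    ring

lemma exists_diagonalSL2_mul_toBlocks {M : Matrix (Fin 2 ⊕ Fin 2) (Fin 2 ⊕ Fin 2) R}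
    (hM : M ∈ symplecticGroup (Fin 2) R) (hA : M (.inl 1) (.inl 0) = 0)
    (hC₀ : M (.inr 0) (.inl 0) = 0) (hC₁ : M (.inr 1) (.inl 0) = 0) :
    ∃ g : Fin 2 → SL(2, R),
      (diagonalSL2 g * M).toBlocks₂₁ = 0 ∧ (diagonalSL2 g * M).toBlocks₁₁.det = 1 := by
  obtain ⟨hAC, -, hAD⟩ :=
    SymplecticGroup.fromBlocks_mem_iff.1 ((fromBlocks_toBlocks M).symm ▸ hM)
  have hunit : M (.inl 0) (.inl 0) * M (.inr 0) (.inr 0) = 1 := by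
    simpa [mul_apply, toBlocks₁₁, toBlocks₂₁, toBlocks₂₂, hA, hC₀, hC₁] using congr_fun₂ hAD 0 0
  have hC : M (.inr 0) (.inl 1) = 0 := by
    have h01 : M (.inl 0) (.inl 0) * M (.inr 0) (.inl 1) = 0 := by
      simpa [mul_apply, toBlocks₁₁, toBlocks₂₁, hA, hC₀, hC₁] using congr_fun₂ hAC 0 1
    exact (IsUnit.of_mul_eq_one _ hunit).mul_right_eq_zero.1 h01
  have hD : M (.inr 0) (.inr 1) = 0 := by
    have h01 : M (.inl 0) (.inl 0) * M (.inr 0) (.inr 1) = 0 := by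
      simpa [mul_apply, toBlocks₁₁, toBlocks₂₁, toBlocks₂₂, hA, hC₀, hC₁] using congr_fun₂ hAD 0 1
    exact (IsUnit.of_mul_eq_one _ hunit).mul_right_eq_zero.1 h01
  have hdet : M (.inl 1) (.inl 1) * M (.inr 1) (.inr 1)
      - M (.inr 1) (.inl 1) * M (.inl 1) (.inr 1) = 1 := by
    simpa [mul_apply, toBlocks₁₁, toBlocks₁₂, toBlocks₂₁, toBlocks₂₂, hC, hD] using
      congr_fun₂ hAD 1 1
  let g : SL(2, R) := ⟨!![M (.inr 0) (.inr 0), 0; 0, M (.inl 0) (.inl 0)], by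
    rw [det_fin_two_of]; linear_combination hunit⟩
  let h : SL(2, R) := ⟨!![M (.inr 1) (.inr 1), -M (.inl 1) (.inr 1);
    -M (.inr 1) (.inl 1), M (.inl 1) (.inl 1)], by rw [det_fin_two_of]; linear_combination hdet⟩
  refine ⟨![g, h], ?_, ?_⟩
  · ext i j
    fin_cases i <;> fin_cases j <;>
      simp [g, h, toBlocks₂₁, diagonalSL2, mul_apply, diagonal_apply, hA, hC₀, hC₁, hC]
    ring
  · simp [g, h, toBlocks₁₁, diagonalSL2, mul_apply, diagonal_apply, det_fin_two, hA, hC₀, hC₁]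
    linear_combination M (.inr 0) (.inr 0) * M (.inl 0) (.inl 0) * hdet + hunit

variable {K : Submonoid (Matrix (Fin 2 ⊕ Fin 2) (Fin 2 ⊕ Fin 2) R)}

lemma diagonalSL2_mem (hlevi : ∀ U, levi U ∈ K)
    (hfst : ∀ g, diagonalSL2 (Pi.mulSingle 0 g) ∈ K) (g : Fin 2 → SL(2, R)) :
    diagonalSL2 g ∈ K := by
  obtain ⟨w, hw, hw'⟩ : ∃ w : SL(2, R), (w : Matrix (Fin 2) (Fin 2) R) = !![0, -1; 1, 0] ∧
      ((w⁻¹ : SL(2, R)) : Matrix (Fin 2) (Fin 2) R) = !![0, 1; -1, 0] :=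
    ⟨⟨!![0, -1; 1, 0], by simp⟩, rfl, (adjugate_fin_two_of ..).trans (by simp)⟩
  have hsnd (h : SL(2, R)) : diagonalSL2 (Pi.mulSingle 1 h) =
      levi w * diagonalSL2 (Pi.mulSingle 0 h) * levi w⁻¹ := by
    ext (i | i) (j | j) <;> fin_cases i <;> fin_cases j <;>
      simp [levi, diagonalSL2, mul_apply, hw, hw', -Matrix.SpecialLinearGroup.coe_inv]
  have hg : g = Pi.mulSingle 0 (g 0) * Pi.mulSingle 1 (g 1) := by
    ext i : 1
    fin_cases i <;> simp
  rw [hg, map_mul, hsnd]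
  exact mul_mem (hfst _) (mul_mem (mul_mem (hlevi _) (hfst _)) (hlevi _))

lemma translation_mem (hlevi : ∀ U, levi U ∈ K) (hdiag : ∀ g, diagonalSL2 g ∈ K)
    {S : Matrix (Fin 2) (Fin 2) R} (hS : Sᵀ = S) : translation S ∈ K := by
  let U : SL(2, R) := ⟨!![1, 0; 1, 1], by simp⟩
  have hdecomp : S = diagonal ![S 0 0 - S 0 1, S 1 1 - S 0 1] +
      (U : Matrix (Fin 2) (Fin 2) R) * diagonal ![S 0 1, 0] * (U : Matrix (Fin 2) (Fin 2) R)ᵀ := by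
    have h10 : S 1 0 = S 0 1 := congr_fun₂ hS 0 1
    ext i j
    fin_cases i <;> fin_cases j <;> simp [U, vecMul, dotProduct, mul_apply, Fin.sum_univ_two, h10]
  rw [hdecomp, translation_add, translation_mul_mul_transpose, translation_diagonal,
    translation_diagonal]
  exact mul_mem (hdiag _) (mul_mem (mul_mem (hlevi _) (hdiag _)) (hlevi _))

lemma mem_of_fst_column_eq (hlevi : ∀ U, levi U ∈ K) (hdiag : ∀ g, diagonalSL2 g ∈ K)
    {M : Matrix (Fin 2 ⊕ Fin 2) (Fin 2 ⊕ Fin 2) R} (hM : M ∈ symplecticGroup (Fin 2) R)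
    (hA : M (.inl 1) (.inl 0) = 0) (hC₀ : M (.inr 0) (.inl 0) = 0)
    (hC₁ : M (.inr 1) (.inl 0) = 0) : M ∈ K := by
  obtain ⟨g, hgC, hgA⟩ := exists_diagonalSL2_mul_toBlocks hM hA hC₀ hC₁
  obtain ⟨S, hS, hgM⟩ :=
    eq_translation_mul_levi (mul_mem (diagonalSL2_mem_symplecticGroup g) hM) hgC hgA
  refine mem_of_map_mul_mem hdiag (g := g) ?_
  rw [hgM]
  exact mul_mem (translation_mem hlevi hdiag hS) (hlevi _)

theorem symplecticGroup_fin_two_le [IsDomain R] [IsBezout R] (hlevi : ∀ U, levi U ∈ K)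
    (hfst : ∀ g, diagonalSL2 (Pi.mulSingle 0 g) ∈ K) : symplecticGroup (Fin 2) R ≤ K := by
  intro M hM
  have hdiag := diagonalSL2_mem hlevi hfst
  obtain ⟨g₀, hg₀⟩ := exists_SL2_annihilating (M (.inl 0) (.inl 0)) (M (.inr 0) (.inl 0))
  obtain ⟨g₁, hg₁⟩ := exists_SL2_annihilating (M (.inl 1) (.inl 0)) (M (.inr 1) (.inl 0))
  obtain ⟨N, hN⟩ : ∃ N, N = diagonalSL2 ![g₀, g₁] * M := ⟨_, rfl⟩
  have hN₂ : N (.inr 0) (.inl 0) = 0 := by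
    simpa [hN, diagonalSL2, mul_apply, diagonal_apply] using hg₀
  have hN₃ : N (.inr 1) (.inl 0) = 0 := by
    simpa [hN, diagonalSL2, mul_apply, diagonal_apply] using hg₁
  obtain ⟨U, hU⟩ := exists_SL2_annihilating (N (.inl 0) (.inl 0)) (N (.inl 1) (.inl 0))
  refine mem_of_map_mul_mem hdiag (g := ![g₀, g₁]) ?_
  rw [← hN]
  refine mem_of_map_mul_mem hlevi (g := U) <|
    mem_of_fst_column_eq hlevi hdiag (mul_mem (levi_mem_symplecticGroup _)
      (hN ▸ mul_mem (diagonalSL2_mem_symplecticGroup _) hM)) ?_ ?_ ?_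
  · simpa [levi, mul_apply] using hU
  · simp [levi, mul_apply, hN₂, hN₃]
  · simp [levi, mul_apply, hN₂, hN₃]

end SymplecticGeneration

section SecondOrderTheta

variable {n : Type*} [Fintype n]

/-- The point `m + ε / 2` of the lattice coset attached to the characteristic `ε`. -/
noncomputable def halfShift (ε m : n → ℤ) : n → ℂ := fun i => m i + ε i / 2

/-- The `m`-th term of the second-order theta series of characteristic `ε`. -/
noncomputable def secondOrderThetaTerm (ε : n → ℤ) (τ : Matrix n n ℂ) (m : n → ℤ) : ℂ :=
  cexp (2 * π * I * (halfShift ε m ⬝ᵥ τ *ᵥ halfShift ε m))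

/-- The second-order theta constant `Θ[ε](τ) = θ[ε;0](2τ)` in arbitrary genus. -/
noncomputable def secondOrderTheta (ε : n → ℤ) (τ : Matrix n n ℂ) : ℂ :=
  ∑' m, secondOrderThetaTerm ε τ m

lemma Θf_eq_secondOrderTheta (ε : Fin 2 → ℤ) (τ : Mat2) : Θf ε τ = secondOrderTheta ε τ := by
  refine tsum_congr fun m => ?_
  rw [secondOrderThetaTerm]
  congr 1
  simp [halfShift, dotProduct, mulVec, Fin.sum_univ_two]
  ring

lemma secondOrderTheta_congr {ε ε' : n → ℤ} (h : ∀ i, ε' i ≡ ε i [ZMOD 2])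
    (τ : Matrix n n ℂ) : secondOrderTheta ε τ = secondOrderTheta ε' τ := by
  choose d hd using fun i => (h i).dvd
  have hshift (m : n → ℤ) : halfShift ε m = halfShift ε' (m + d) := by
    ext i
    have hε : (ε i : ℂ) - ε' i = 2 * d i := by exact_mod_cast hd i
    simp only [halfShift, Pi.add_apply, Int.cast_add]
    linear_combination hε / 2
  simp only [secondOrderTheta, secondOrderThetaTerm, hshift]
  exact (Equiv.addRight d).tsum_eq fun m => secondOrderThetaTerm ε' τ m

lemma secondOrderTheta_mul_mul_transpose [DecidableEq n] (U : Matrix.SpecialLinearGroup n ℤ)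
    (ε : n → ℤ) (τ : Matrix n n ℂ) :
    secondOrderTheta ε ((U : Matrix n n ℤ).map (↑) * τ * ((U : Matrix n n ℤ).map (↑))ᵀ) =
      secondOrderTheta ((U : Matrix n n ℤ)ᵀ *ᵥ ε) τ := by
  have hshift (m : n → ℤ) : ((U : Matrix n n ℤ).map (↑))ᵀ *ᵥ halfShift ε m =
      halfShift ((U : Matrix n n ℤ)ᵀ *ᵥ ε) ((U : Matrix n n ℤ)ᵀ *ᵥ m) := by
    ext i
    simp [halfShift, mulVec, dotProduct, mul_add, Finset.sum_add_distrib, Finset.sum_div,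
      mul_div_assoc]
  have hterm (m : n → ℤ) :
      secondOrderThetaTerm ε ((U : Matrix n n ℤ).map (↑) * τ * ((U : Matrix n n ℤ).map (↑))ᵀ) m =
        secondOrderThetaTerm ((U : Matrix n n ℤ)ᵀ *ᵥ ε) τ ((U : Matrix n n ℤ)ᵀ *ᵥ m) := by
    rw [secondOrderThetaTerm, secondOrderThetaTerm, ← hshift, ← mulVec_mulVec, ← mulVec_mulVec,
      dotProduct_mulVec, ← mulVec_transpose]
  simp only [secondOrderTheta, hterm]
  exact (Matrix.SpecialLinearGroup.toLin' U.transpose).toEquiv.tsum_eq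
    (secondOrderThetaTerm ((U : Matrix n n ℤ)ᵀ *ᵥ ε) τ)

lemma halfShift_dotProduct_mulVec {S : Matrix n n ℤ} (hS : Sᵀ = S) (ε m : n → ℤ) :
    halfShift ε m ⬝ᵥ S.map (↑) *ᵥ halfShift ε m =
      (m ⬝ᵥ S *ᵥ (m + ε) : ℤ) + (ε ⬝ᵥ S *ᵥ ε : ℤ) / 4 := by
  have hcast (x y : n → ℤ) : ((x ⬝ᵥ S *ᵥ y : ℤ) : ℂ) =
      ((↑) ∘ x : n → ℂ) ⬝ᵥ S.map (↑) *ᵥ ((↑) ∘ y : n → ℂ) := by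
    simp [dotProduct, mulVec]
  have hsymm : ε ⬝ᵥ S *ᵥ m = m ⬝ᵥ S *ᵥ ε := by
    rw [dotProduct_mulVec, ← mulVec_transpose, hS, dotProduct_comm]
  have hv : halfShift ε m = (↑) ∘ m + (2⁻¹ : ℂ) • ((↑) ∘ ε : n → ℂ) := by
    ext i
    simp [halfShift, div_eq_inv_mul]
  simp only [hv, mulVec_add, mulVec_smul, dotProduct_add, add_dotProduct, smul_dotProduct,
    dotProduct_smul, ← hcast, hsymm, smul_eq_mul]
  push_cast
  ring

lemma secondOrderTheta_add_intCast {S : Matrix n n ℤ} (hS : Sᵀ = S) (ε : n → ℤ)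
    (τ : Matrix n n ℂ) :
    secondOrderTheta ε (τ + S.map (↑)) = I ^ (ε ⬝ᵥ S *ᵥ ε) * secondOrderTheta ε τ := by
  rw [secondOrderTheta, secondOrderTheta, ← tsum_mul_left]
  have hI : I ^ (ε ⬝ᵥ S *ᵥ ε) = cexp ((ε ⬝ᵥ S *ᵥ ε : ℤ) * (π / 2 * I)) := by
    rw [exp_int_mul, exp_pi_div_two_mul_I]
  refine tsum_congr fun m => ?_
  rw [secondOrderThetaTerm, add_mulVec, dotProduct_add, halfShift_dotProduct_mulVec hS,
    secondOrderThetaTerm, hI, ← Complex.exp_add]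
  refine exp_eq_exp_iff_exists_int.2 ⟨m ⬝ᵥ S *ᵥ (m + ε), ?_⟩
  ring

end SecondOrderTheta

section Summability

lemma det_div_trace_mul_le {Y : Matrix (Fin 2) (Fin 2) ℝ} (hY : Y.PosDef) (x : Fin 2 → ℝ) :
    Y.det / Y.trace * (x ⬝ᵥ x) ≤ x ⬝ᵥ Y *ᵥ x := by
  have hsymm : Y 1 0 = Y 0 1 := hY.1.apply 0 1
  have htrace : 0 < Y.trace := hY.trace_pos
  have cayley : x ⬝ᵥ Y *ᵥ x * Y.trace = Y.det * (x ⬝ᵥ x) + (Y *ᵥ x) ⬝ᵥ (Y *ᵥ x) := by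
    simp only [dotProduct, mulVec, trace, det_fin_two, diag_apply, Fin.sum_univ_two, hsymm]
    ring
  rw [div_mul_eq_mul_div, div_le_iff₀ htrace, cayley]
  exact le_add_of_nonneg_right (Finset.sum_nonneg fun _ _ => mul_self_nonneg _)

lemma norm_secondOrderThetaTerm {n : Type*} [Fintype n] (ε : n → ℤ) (τ : Matrix n n ℂ)
    (m : n → ℤ) :
    ‖secondOrderThetaTerm ε τ m‖ =
      Real.exp (-2 * π * ((re ∘ halfShift ε m) ⬝ᵥ τ.map im *ᵥ (re ∘ halfShift ε m))) := by
  have hreal (i) : halfShift ε m i = ((re ∘ halfShift ε m) i : ℂ) := by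
    simp [halfShift]
  have him : (halfShift ε m ⬝ᵥ τ *ᵥ halfShift ε m).im =
      (re ∘ halfShift ε m) ⬝ᵥ τ.map im *ᵥ (re ∘ halfShift ε m) := by
    simp only [dotProduct, mulVec, hreal, im_sum, im_ofReal_mul, im_mul_ofReal, map_apply]
  rw [secondOrderThetaTerm, norm_exp, ← him]
  simp

lemma summable_secondOrderThetaTerm {τ : Matrix (Fin 2) (Fin 2) ℂ}
    (hτ : τ ∈ siegelUpperHalfSpace (Fin 2)) (ε : Fin 2 → ℤ) :
    Summable (secondOrderThetaTerm ε τ) := by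
  obtain ⟨k, hk, hbound⟩ : ∃ k > 0, ∀ x, k * (x ⬝ᵥ x) ≤ x ⬝ᵥ τ.map im *ᵥ x :=
    ⟨_, div_pos hτ.2.det_pos hτ.2.trace_pos, det_div_trace_mul_le hτ.2⟩
  have hgauss (e : ℤ) : Summable fun j : ℤ => Real.exp (-π * (j + (e / 2 : ℝ)) ^ 2 * (2 * k)) :=
    (HurwitzZeta.hasSum_int_evenKernel _ (by positivity)).summable
  have hprod := (hgauss (ε 0)).mul_of_nonneg (hgauss (ε 1)) (fun _ => (Real.exp_pos _).le)
    fun _ => (Real.exp_pos _).le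
  refine ((finTwoArrowEquiv ℤ).summable_iff.2 hprod).of_norm_bounded fun m => ?_
  have hsq : (re ∘ halfShift ε m) ⬝ᵥ (re ∘ halfShift ε m) =
      (m 0 + ε 0 / 2 : ℝ) ^ 2 + (m 1 + ε 1 / 2 : ℝ) ^ 2 := by
    simp [halfShift, dotProduct, Fin.sum_univ_two, sq]
  change _ ≤ Real.exp (-π * (m 0 + (ε 0 / 2 : ℝ)) ^ 2 * (2 * k)) *
    Real.exp (-π * (m 1 + (ε 1 / 2 : ℝ)) ^ 2 * (2 * k))
  rw [norm_secondOrderThetaTerm, ← Real.exp_add, Real.exp_le_exp]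
  linear_combination 2 * π * hbound (re ∘ halfShift ε m) - 2 * π * k * hsq

end Summability

section PartialInversion

lemma tsum_int_eq_tsum_even_add_tsum_odd {E : Type*} [NormedAddCommGroup E] [CompleteSpace E]
    {f : ℤ → E} (hf : Summable f) :
    ∑' n, f n = ∑' k, f (2 * k) + ∑' k, f (2 * k + 1) := by
  let e : Fin 2 × ℤ ≃ ℤ := (Equiv.prodComm _ _).trans (Int.divModEquiv 2).symm
  calc ∑' n, f n = ∑' p, f (e p) := (e.tsum_eq f).symm
    _ = ∑' i, ∑' k, f (e (i, k)) := (e.summable_iff.2 hf).tsum_prod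
    _ = ∑' k, f (2 * k) + ∑' k, f (2 * k + 1) := by
      simp [e, tsum_fintype, Fin.sum_univ_two, mul_comm]

lemma tsum_exp_add_sq_div {a : ℂ} (ha : 0 < a.im) (z : ℂ) :
    ∑' n : ℤ, cexp (-2 * π * I * (n + z) ^ 2 / a) =
      (-I * a / 2) ^ (1 / 2 : ℂ) *
        (∑' n : ℤ, cexp (2 * π * I * (n ^ 2 * a - 2 * n * z)) +
          ∑' n : ℤ, cexp (2 * π * I * ((n + 1 / 2) ^ 2 * a - 2 * (n + 1 / 2) * z))) := by
  have hre : 0 < (-I * a / 2).re := by simpa using ha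
  have ha0 : a ≠ 0 := fun h => by simp [h] at ha
  have hsum : Summable fun n : ℤ => cexp (π * I * (n ^ 2 * (a / 2) - 2 * n * z)) := by
    refine ((summable_jacobiTheta₂_term_iff (-z) (a / 2)).2 (by simpa using ha)).congr fun n => ?_
    rw [jacobiTheta₂_term]
    ring_nf
  have hpoisson := Complex.tsum_exp_neg_quadratic hre (-I * z)
  rw [one_div, eq_inv_mul_iff_mul_eq₀ (by simp [cpow_eq_zero_iff, ha0])] at hpoisson
  calc ∑' n : ℤ, cexp (-2 * π * I * (n + z) ^ 2 / a)
      = ∑' n : ℤ, cexp (-π / (-I * a / 2) * (n + I * (-I * z)) ^ 2) := by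
        refine tsum_congr fun n => congr_arg cexp ?_
        rw [← mul_assoc, mul_neg, I_mul_I, neg_neg, one_mul]
        field_simp
        linear_combination -(n + z) ^ 2 * I_mul_I
    _ = (-I * a / 2) ^ (1 / 2 : ℂ) *
          ∑' n : ℤ, cexp (-π * (-I * a / 2) * n ^ 2 + 2 * π * (-I * z) * n) := hpoisson.symm
    _ = (-I * a / 2) ^ (1 / 2 : ℂ) *
          ∑' n : ℤ, cexp (π * I * (n ^ 2 * (a / 2) - 2 * n * z)) := by
        congr! 4 with n
        ring
    _ = _ := by
        rw [tsum_int_eq_tsum_even_add_tsum_odd hsum]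
        congr! 5 with n n
        · push_cast; ring
        · push_cast; ring

/-- The action of the element of `Sp₄` embedding `(0 -1; 1 0)` in the first symplectic plane. -/
noncomputable def partialInversion (τ : Matrix (Fin 2) (Fin 2) ℂ) : Matrix (Fin 2) (Fin 2) ℂ :=
  !![-1 / τ 0 0, τ 0 1 / τ 0 0; τ 1 0 / τ 0 0, τ 1 1 - τ 0 1 * τ 1 0 / τ 0 0]

lemma hasSum_tsum_secondOrderThetaTerm {τ : Matrix (Fin 2) (Fin 2) ℂ}
    (hτ : τ ∈ siegelUpperHalfSpace (Fin 2)) (ε : Fin 2 → ℤ) :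
    HasSum (fun y => ∑' x, secondOrderThetaTerm ε τ ![x, y]) (secondOrderTheta ε τ) := by
  let e : ℤ × ℤ ≃ (Fin 2 → ℤ) := (Equiv.prodComm ℤ ℤ).trans (finTwoArrowEquiv ℤ).symm
  have hsum : Summable (secondOrderThetaTerm ε τ ∘ e) :=
    e.summable_iff.2 (summable_secondOrderThetaTerm hτ ε)
  exact hsum.prod.hasSum_iff.2 (hsum.tsum_prod.symm.trans (e.tsum_eq _))

lemma tsum_secondOrderThetaTerm_partialInversion {τ : Matrix (Fin 2) (Fin 2) ℂ}
    (hτ : τ ∈ siegelUpperHalfSpace (Fin 2)) (e f y : ℤ) :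
    ∑' x, secondOrderThetaTerm ![e, f] (partialInversion τ) ![x, y] =
      (-I * τ 0 0 / 2) ^ (1 / 2 : ℂ) * (∑' x, secondOrderThetaTerm ![0, f] τ ![x, y] +
        (-1) ^ e * ∑' x, secondOrderThetaTerm ![1, f] τ ![x, y]) := by
  have ha : 0 < (τ 0 0).im := hτ.2.diag_pos
  have hsymm : τ 1 0 = τ 0 1 := congr_fun₂ hτ.1 0 1
  have ha0 : τ 0 0 ≠ 0 := fun h => by simp [h] at ha
  obtain ⟨v, hv⟩ : ∃ v : ℂ, v = y + f / 2 := ⟨_, rfl⟩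
  have hleft (x : ℤ) : secondOrderThetaTerm ![e, f] (partialInversion τ) ![x, y] =
      cexp (2 * π * I * (τ 1 1 * v ^ 2)) *
        cexp (-2 * π * I * (x + (e / 2 - v * τ 0 1)) ^ 2 / τ 0 0) := by
    rw [← Complex.exp_add, secondOrderThetaTerm]
    congr 1
    simp [halfShift, partialInversion, dotProduct, mulVec, Fin.sum_univ_two, hsymm, ← hv]
    field
  have heven (x : ℤ) : secondOrderThetaTerm ![0, f] τ ![x, y] =
      cexp (2 * π * I * (τ 1 1 * v ^ 2)) *
        cexp (2 * π * I * (x ^ 2 * τ 0 0 - 2 * x * (e / 2 - v * τ 0 1))) := by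
    rw [← Complex.exp_add, secondOrderThetaTerm]
    refine exp_eq_exp_iff_exists_int.2 ⟨e * x, ?_⟩
    simp [halfShift, dotProduct, mulVec, Fin.sum_univ_two, hsymm, ← hv]
    ring
  have hodd (x : ℤ) : (-1) ^ e * secondOrderThetaTerm ![1, f] τ ![x, y] =
      cexp (2 * π * I * (τ 1 1 * v ^ 2)) *
        cexp (2 * π * I * ((x + 1 / 2) ^ 2 * τ 0 0 - 2 * (x + 1 / 2) * (e / 2 - v * τ 0 1))) := by
    rw [← exp_pi_mul_I, ← exp_int_mul, secondOrderThetaTerm, ← Complex.exp_add,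
      ← Complex.exp_add]
    refine exp_eq_exp_iff_exists_int.2 ⟨e * (x + 1), ?_⟩
    simp [halfShift, dotProduct, mulVec, Fin.sum_univ_two, hsymm, ← hv]
    ring
  rw [← tsum_mul_left (a := (-1) ^ e)]
  simp only [hleft, heven, hodd, tsum_mul_left, tsum_exp_add_sq_div ha]
  ring

theorem secondOrderTheta_partialInversion {τ : Matrix (Fin 2) (Fin 2) ℂ}
    (hτ : τ ∈ siegelUpperHalfSpace (Fin 2))
    (hτ' : partialInversion τ ∈ siegelUpperHalfSpace (Fin 2)) (e f : ℤ) :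
    secondOrderTheta ![e, f] (partialInversion τ) =
      (-I * τ 0 0 / 2) ^ (1 / 2 : ℂ) *
        (secondOrderTheta ![0, f] τ + (-1) ^ e * secondOrderTheta ![1, f] τ) := by
  have hsum := ((hasSum_tsum_secondOrderThetaTerm hτ ![0, f]).add
    ((hasSum_tsum_secondOrderThetaTerm hτ ![1, f]).mul_left ((-1) ^ e))).mul_left
      ((-I * τ 0 0 / 2) ^ (1 / 2 : ℂ))
  simp only [← tsum_secondOrderThetaTerm_partialInversion hτ] at hsum
  exact (hasSum_tsum_secondOrderThetaTerm hτ' ![e, f]).unique hsum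

end PartialInversion

section ElementaryActions

variable {n R R' : Type*} [Fintype n] [DecidableEq n] [CommRing R] [CommRing R']

lemma map_mem_symplecticGroup (f : R →+* R') {M : Matrix (n ⊕ n) (n ⊕ n) R}
    (hM : M ∈ symplecticGroup n R) : M.map f ∈ symplecticGroup n R' := by
  have hJ : (J n R).map f = J n R' := by
    simp [J, fromBlocks_map, Matrix.map_neg]
  have h := congr_arg (fun N => N.map f) (SymplecticGroup.mem_iff.1 hM)
  simpa [Matrix.map_mul, hJ, ← transpose_map, SymplecticGroup.mem_iff] using h

lemma map_levi (f : R →+* R') (U : Matrix.SpecialLinearGroup n R) :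
    (levi U).map f = levi (U.map f) := by
  simp [levi, fromBlocks_map, ← transpose_map, ← map_inv, -Matrix.SpecialLinearGroup.coe_inv]

lemma moebius_translation (S τ : Matrix n n R) : moebius (translation S) τ = τ + S := by
  simp [moebius, moebiusNum, moebiusDenom, translation]

lemma moebiusDenom_translation (S τ : Matrix n n R) : moebiusDenom (translation S) τ = 1 := by
  simp [moebiusDenom, translation]

lemma moebius_levi (U : Matrix.SpecialLinearGroup n R) (τ : Matrix n n R) :
    moebius (levi U) τ = (U : Matrix n n R) * τ * (U : Matrix n n R)ᵀ := by
  have hinv : (((U⁻¹ : Matrix.SpecialLinearGroup n R) : Matrix n n R)ᵀ)⁻¹ =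
      (U : Matrix n n R)ᵀ := by
    refine inv_eq_right_inv ?_
    rw [← transpose_mul, ← Matrix.SpecialLinearGroup.coe_mul, mul_inv_cancel,
      Matrix.SpecialLinearGroup.coe_one, transpose_one]
  simp [moebius, moebiusNum, moebiusDenom, levi, hinv, -Matrix.SpecialLinearGroup.coe_inv]

lemma det_moebiusDenom_levi (U : Matrix.SpecialLinearGroup n R) (τ : Matrix n n R) :
    (moebiusDenom (levi U) τ).det = 1 := by
  simp [moebiusDenom, levi, -Matrix.SpecialLinearGroup.coe_inv]

end ElementaryActions

section Automorphy

variable {n : Type*}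

lemma map_intCast_map_star {m : Type*} (M : Matrix m n ℤ) :
    (M.map (↑) : Matrix m n ℂ).map star = M.map (↑) := by
  ext
  simp

variable [Fintype n] [DecidableEq n]

/-- The integral symplectic matrices under which a function on the Siegel upper half space
transforms with weight `k`. -/
def automorphySubmonoid (k : ℕ) (f : Matrix n n ℂ → ℂ) :
    Submonoid (Matrix (n ⊕ n) (n ⊕ n) ℤ) where
  carrier := {M | M ∈ symplecticGroup n ℤ ∧ ∀ τ ∈ siegelUpperHalfSpace n,
    f (moebius (M.map (↑)) τ) = (moebiusDenom (M.map (↑)) τ).det ^ k * f τ}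
  one_mem' := ⟨one_mem _, fun τ _ => by
    rw [Matrix.map_one _ Int.cast_zero Int.cast_one, ← fromBlocks_one]
    simp [moebius, moebiusNum, moebiusDenom, -fromBlocks_one]⟩
  mul_mem' := by
    rintro M N ⟨hM, hfM⟩ ⟨hN, hfN⟩
    refine ⟨mul_mem hM hN, fun τ hτ => ?_⟩
    have hNℂ : N.map (↑) ∈ symplecticGroup n ℂ := map_mem_symplecticGroup (Int.castRingHom ℂ) hN
    have hunit := isUnit_moebiusDenom hNℂ (map_intCast_map_star N) hτ
    have hMN : ((M * N).map (↑) : Matrix (n ⊕ n) (n ⊕ n) ℂ) = M.map (↑) * N.map (↑) :=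
      Matrix.map_mul (f := Int.castRingHom ℂ)
    rw [hMN, moebius_mul _ hunit, moebiusDenom_mul _ hunit,
      hfM _ (moebius_mem_siegelUpperHalfSpace hNℂ (map_intCast_map_star N) hτ), hfN τ hτ, det_mul]
    ring

lemma levi_mem_automorphySubmonoid {k : ℕ} {f : Matrix n n ℂ → ℂ}
    {U : Matrix.SpecialLinearGroup n ℤ} (hf : ∀ τ, f ((U : Matrix n n ℤ).map (↑) * τ *
      ((U : Matrix n n ℤ).map (↑))ᵀ) = f τ) : levi U ∈ automorphySubmonoid k f := by
  refine ⟨levi_mem_symplecticGroup U, fun τ _ => ?_⟩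
  have hcast : (levi U).map (↑) = levi (U.map (Int.castRingHom ℂ)) :=
    map_levi (Int.castRingHom ℂ) U
  rw [hcast, moebius_levi, det_moebiusDenom_levi, one_pow, one_mul]
  exact hf τ

lemma translation_mem_automorphySubmonoid {k : ℕ} {f : Matrix n n ℂ → ℂ} {S : Matrix n n ℤ}
    (hS : Sᵀ = S) (hf : ∀ τ, f (τ + S.map (↑)) = f τ) :
    translation S ∈ automorphySubmonoid k f := by
  refine ⟨SymplecticGroup.fromBlocks_mem_iff.2 (by simp [hS]), fun τ _ => ?_⟩
  have hcast : (translation S).map (↑) = translation (S.map ((↑) : ℤ → ℂ)) := by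
    simp [translation, fromBlocks_map]
  rw [hcast, moebius_translation, moebiusDenom_translation, det_one, one_pow, one_mul, hf]

open ModularGroup in
lemma closure_S_T : Submonoid.closure {S, T} = (⊤ : Submonoid SL(2, ℤ)) := by
  -- `S ^ 2 = (S * T) ^ 3 = -1`
  have hS : S⁻¹ = S ^ 3 := by decide
  have hT : T⁻¹ = (S * T) ^ 5 * S := by decide
  have hSmem : S ∈ Submonoid.closure {S, T} := Submonoid.subset_closure (by simp)
  have hTmem : T ∈ Submonoid.closure {S, T} := Submonoid.subset_closure (by simp)
  rw [eq_top_iff, ← Subgroup.top_toSubmonoid, ← SpecialLinearGroup.SL2Z_generators,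
    Subgroup.closure_toSubmonoid, Submonoid.closure_le]
  rintro g ((rfl | rfl) | (h | h))
  · exact hSmem
  · exact hTmem
  · rw [inv_eq_iff_eq_inv.1 h, hS]
    exact pow_mem hSmem 3
  · rw [inv_eq_iff_eq_inv.1 h, hT]
    exact mul_mem (pow_mem (mul_mem hSmem hTmem) 5) hSmem

open ModularGroup in
theorem symplecticGroup_fin_two_int_le {K : Submonoid (Matrix (Fin 2 ⊕ Fin 2) (Fin 2 ⊕ Fin 2) ℤ)}
    (hleviS : levi S ∈ K) (hleviT : levi T ∈ K)
    (hfstS : diagonalSL2 (Pi.mulSingle 0 S) ∈ K) (hfstT : diagonalSL2 (Pi.mulSingle 0 T) ∈ K) :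
    symplecticGroup (Fin 2) ℤ ≤ K := by
  have hgen (f : SL(2, ℤ) →* Matrix (Fin 2 ⊕ Fin 2) (Fin 2 ⊕ Fin 2) ℤ) (hS : f S ∈ K)
      (hT : f T ∈ K) (g) : f g ∈ K := by
    have hle : Submonoid.closure {S, T} ≤ K.comap f :=
      (Submonoid.closure_le).2 (by simp [Set.insert_subset_iff, hS, hT])
    rw [closure_S_T] at hle
    exact hle (Submonoid.mem_top g)
  have hlevi (U : SL(2, ℤ)) : levi U ∈ K := hgen levi hleviS hleviT U
  have hfst (g : SL(2, ℤ)) : diagonalSL2 (Pi.mulSingle 0 g) ∈ K :=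
    hgen (diagonalSL2.comp (MonoidHom.mulSingle (fun _ : Fin 2 => SL(2, ℤ)) 0)) hfstS hfstT g
  exact symplecticGroup_fin_two_le hlevi hfst

end Automorphy

section Psi6

/-- The form of degree 12 whose value at the four second order theta constants is `Ψ6`. -/
def psi6Form {R : Type*} [CommRing R] (x y z w : R) : R :=
  (x ^ 4 + y ^ 4 + z ^ 4 + w ^ 4) ^ 3
    - 36 * (x ^ 4 + y ^ 4 + z ^ 4 + w ^ 4) * ((x ^ 2 * y ^ 2 + z ^ 2 * w ^ 2) ^ 2
      + (x ^ 2 * z ^ 2 + y ^ 2 * w ^ 2) ^ 2 + (x ^ 2 * w ^ 2 + y ^ 2 * z ^ 2) ^ 2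
      - 16 * (x * y * z * w) ^ 2)
    + 432 * (x ^ 2 * y ^ 2 + z ^ 2 * w ^ 2) * (x ^ 2 * z ^ 2 + y ^ 2 * w ^ 2)
      * (x ^ 2 * w ^ 2 + y ^ 2 * z ^ 2)

section PsiForm

variable {R : Type*} [CommRing R] (x y z w : R)

lemma psi6Form_swap_second_third : psi6Form x z y w = psi6Form x y z w := by
  unfold psi6Form
  ring

lemma psi6Form_swap_third_fourth : psi6Form x y w z = psi6Form x y z w := by
  unfold psi6Form
  ring

lemma psi6Form_mul_of_sq_eq_neg_one {i : R} (hi : i ^ 2 = -1) :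
    psi6Form x y (i * z) (i * w) = psi6Form x y z w := by
  have hi4 : i ^ 4 = 1 := by linear_combination (i ^ 2 - 1) * hi
  unfold psi6Form
  simp only [mul_pow, hi, hi4]
  ring

lemma psi6Form_hadamard (r : R) :
    psi6Form (r * (x + z)) (r * (y + w)) (r * (x - z)) (r * (y - w)) =
      -64 * r ^ 12 * psi6Form x y z w := by
  unfold psi6Form
  ring

end PsiForm

lemma Ψ6_eq_psi6Form (τ : Mat2) :
    Ψ6 τ = psi6Form (secondOrderTheta ![0, 0] τ) (secondOrderTheta ![0, 1] τ)
      (secondOrderTheta ![1, 0] τ) (secondOrderTheta ![1, 1] τ) := by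
  simp only [Ψ6, P0, P1, P2, P3, P4, Θf_eq_secondOrderTheta, psi6Form]
  ring

open ModularGroup

lemma levi_S_mem_automorphySubmonoid : levi S ∈ automorphySubmonoid 6 Ψ6 := by
  refine levi_mem_automorphySubmonoid fun τ => ?_
  have hswap (e f : ℤ) : secondOrderTheta ((S : Matrix (Fin 2) (Fin 2) ℤ)ᵀ *ᵥ ![e, f]) τ =
      secondOrderTheta ![f, e] τ := by
    have hS : (S : Matrix (Fin 2) (Fin 2) ℤ)ᵀ *ᵥ ![e, f] = ![f, -e] := by simp [coe_S]
    have hneg : e ≡ -e [ZMOD 2] := Int.modEq_iff_dvd.2 ⟨-e, by ring⟩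
    rw [hS]
    refine secondOrderTheta_congr ?_ τ
    exact Fin.forall_fin_two.2 ⟨rfl, hneg⟩
  simp only [Ψ6_eq_psi6Form, secondOrderTheta_mul_mul_transpose, hswap]
  exact psi6Form_swap_second_third ..

lemma levi_T_mem_automorphySubmonoid : levi T ∈ automorphySubmonoid 6 Ψ6 := by
  refine levi_mem_automorphySubmonoid fun τ => ?_
  have hshear (e f : ℤ) : (T : Matrix (Fin 2) (Fin 2) ℤ)ᵀ *ᵥ ![e, f] = ![e, e + f] := by
    simp [coe_T]
  have hmod : secondOrderTheta ![1, 1 + 1] τ = secondOrderTheta ![1, 0] τ :=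
    secondOrderTheta_congr (by decide) τ
  simp only [Ψ6_eq_psi6Form, secondOrderTheta_mul_mul_transpose, hshear, hmod, add_zero, zero_add]
  exact psi6Form_swap_third_fourth ..

lemma diagonalSL2_T_mem_automorphySubmonoid :
    diagonalSL2 (Pi.mulSingle 0 T) ∈ automorphySubmonoid 6 Ψ6 := by
  have htrans : diagonalSL2 (Pi.mulSingle 0 T) = translation (diagonal ![(1 : ℤ), 0]) := by
    ext (i | i) (j | j) <;> fin_cases i <;> fin_cases j <;> simp [diagonalSL2, translation, coe_T]
  rw [htrans]
  refine translation_mem_automorphySubmonoid (diagonal_transpose _) fun τ => ?_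
  have hphase (e f : ℤ) : secondOrderTheta ![e, f] (τ + (diagonal ![(1 : ℤ), 0]).map (↑)) =
      I ^ (e * e) * secondOrderTheta ![e, f] τ := by
    rw [secondOrderTheta_add_intCast (diagonal_transpose _)]
    simp
  simp only [Ψ6_eq_psi6Form, hphase, mul_zero, mul_one, zpow_zero, zpow_one, one_mul]
  exact psi6Form_mul_of_sq_eq_neg_one _ _ _ _ I_sq

lemma map_diagonalSL2_mulSingle_S :
    (diagonalSL2 (Pi.mulSingle (0 : Fin 2) S)).map ((↑) : ℤ → ℂ) =
      fromBlocks !![0, 0; 0, 1] !![-1, 0; 0, 0] !![1, 0; 0, 0] !![0, 0; 0, 1] := by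
  ext (i | i) (j | j) <;> fin_cases i <;> fin_cases j <;> simp [diagonalSL2, coe_S]

lemma moebiusDenom_diagonalSL2_S (τ : Mat2) :
    moebiusDenom ((diagonalSL2 (Pi.mulSingle 0 S)).map (↑)) τ = !![τ 0 0, τ 0 1; 0, 1] := by
  rw [map_diagonalSL2_mulSingle_S]
  ext i j
  fin_cases i <;> fin_cases j <;> simp [moebiusDenom, vecMul, dotProduct]

lemma moebius_diagonalSL2_S {τ : Mat2} (hτ : τ 0 0 ≠ 0) :
    moebius ((diagonalSL2 (Pi.mulSingle 0 S)).map (↑)) τ = partialInversion τ := by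
  have hdenom : IsUnit (!![τ 0 0, τ 0 1; 0, 1]).det := by simpa using hτ
  have hnum : moebiusNum ((diagonalSL2 (Pi.mulSingle 0 S)).map (↑)) τ =
      partialInversion τ * !![τ 0 0, τ 0 1; 0, 1] := by
    rw [map_diagonalSL2_mulSingle_S]
    ext i j
    fin_cases i <;> fin_cases j <;> simp [moebiusNum, partialInversion, vecMul, dotProduct] <;>
      field_simp <;> ring
  rw [moebius, moebiusDenom_diagonalSL2_S, hnum, mul_nonsing_inv_cancel_right _ _ hdenom]

lemma diagonalSL2_S_mem_automorphySubmonoid :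
    diagonalSL2 (Pi.mulSingle 0 S) ∈ automorphySubmonoid 6 Ψ6 := by
  have hS : diagonalSL2 (Pi.mulSingle 0 S) ∈ symplecticGroup (Fin 2) ℤ :=
    diagonalSL2_mem_symplecticGroup _
  refine ⟨hS, fun τ hτ => ?_⟩
  have him : 0 < (τ 0 0).im := hτ.2.diag_pos (i := 0)
  have hτ₀ : τ 0 0 ≠ 0 := fun h => him.ne' (by simp [h])
  have hinv : partialInversion τ ∈ siegelUpperHalfSpace (Fin 2) :=
    moebius_diagonalSL2_S hτ₀ ▸ moebius_mem_siegelUpperHalfSpace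
      (map_mem_symplecticGroup (Int.castRingHom ℂ) hS) (map_intCast_map_star _) hτ
  have hroot : ((-I * τ 0 0 / 2) ^ (1 / 2 : ℂ)) ^ 2 = -I * τ 0 0 / 2 := by
    rw [← cpow_mul_nat]
    simp
  have hconst : -64 * ((-I * τ 0 0 / 2) ^ (1 / 2 : ℂ)) ^ 12 = τ 0 0 ^ 6 :=
    calc -64 * ((-I * τ 0 0 / 2) ^ (1 / 2 : ℂ)) ^ 12
        = -64 * (((-I * τ 0 0 / 2) ^ (1 / 2 : ℂ)) ^ 2) ^ 6 := by ring
      _ = -(I ^ 2) ^ 3 * τ 0 0 ^ 6 := by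
          rw [hroot]
          ring
      _ = τ 0 0 ^ 6 := by norm_num
  rw [moebius_diagonalSL2_S hτ₀, moebiusDenom_diagonalSL2_S, det_fin_two_of, mul_one, mul_zero,
    sub_zero, ← hconst, Ψ6_eq_psi6Form, Ψ6_eq_psi6Form, ← psi6Form_hadamard]
  simp only [secondOrderTheta_partialInversion hτ hinv, zpow_zero, zpow_one, one_mul, neg_one_mul,
    ← sub_eq_add_neg]

theorem symplecticGroup_le_automorphySubmonoid_Ψ6 :
    symplecticGroup (Fin 2) ℤ ≤ automorphySubmonoid 6 Ψ6 :=
  symplecticGroup_fin_two_int_le levi_S_mem_automorphySubmonoid levi_T_mem_automorphySubmonoid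
    diagonalSL2_S_mem_automorphySubmonoid diagonalSL2_T_mem_automorphySubmonoid

end Psi6

section Blocks

lemma submatrix_mem_symplecticGroup {M : Matrix (Fin 4) (Fin 4) ℤ} (hM : M ∈ Sp4Z) :
    M.submatrix finSumFinEquiv finSumFinEquiv ∈ symplecticGroup (Fin 2) ℤ := by
  let e : Fin 2 ⊕ Fin 2 ≃ Fin 4 := finSumFinEquiv
  have hJ : Jmat.submatrix e e = -J (Fin 2) ℤ := by decide
  have hMe : (Mᵀ * Jmat * M).submatrix e e = Jmat.submatrix e e :=
    congr_arg (fun N => N.submatrix e e) hM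
  rw [← submatrix_mul_equiv _ M e e e, ← submatrix_mul_equiv _ Jmat e e e, hJ,
    Matrix.mul_neg, Matrix.neg_mul, neg_inj] at hMe
  exact SymplecticGroup.mem_iff'.2 hMe

lemma map_submatrix_eq_fromBlocks (M : Matrix (Fin 4) (Fin 4) ℤ) :
    (M.submatrix finSumFinEquiv finSumFinEquiv).map (↑) =
      fromBlocks (blkA M) (blkB M) (blkC M) (blkD M) := by
  ext (i | i) (j | j) <;> fin_cases i <;> fin_cases j <;> rfl

lemma moebiusNum_map_submatrix (M : Matrix (Fin 4) (Fin 4) ℤ) (τ : Mat2) :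
    moebiusNum ((M.submatrix finSumFinEquiv finSumFinEquiv).map (↑)) τ = blkA M * τ + blkB M := by
  rw [map_submatrix_eq_fromBlocks, moebiusNum, toBlocks_fromBlocks₁₁, toBlocks_fromBlocks₁₂]

lemma moebiusDenom_map_submatrix (M : Matrix (Fin 4) (Fin 4) ℤ) (τ : Mat2) :
    moebiusDenom ((M.submatrix finSumFinEquiv finSumFinEquiv).map (↑)) τ =
      blkC M * τ + blkD M := by
  rw [map_submatrix_eq_fromBlocks, moebiusDenom, toBlocks_fromBlocks₂₁, toBlocks_fromBlocks₂₂]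

end Blocks

/-- `Ψ₆` is a Siegel modular form of weight 6 for `Sp(4,ℤ)`. -/
theorem statement11 : ∀ M ∈ Sp4Z, ∀ τ ∈ SiegelH2,
    IsUnit (blkC M * τ + blkD M) ∧
    (blkA M * τ + blkB M) * (blkC M * τ + blkD M)⁻¹ ∈ SiegelH2 ∧
    Ψ6 ((blkA M * τ + blkB M) * (blkC M * τ + blkD M)⁻¹)
      = (blkC M * τ + blkD M).det ^ 6 * Ψ6 τ := by
  intro M hM τ hτ
  obtain ⟨hsymp, hΨ⟩ :=
    symplecticGroup_le_automorphySubmonoid_Ψ6 (submatrix_mem_symplecticGroup hM)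
  have hsympℂ := map_mem_symplecticGroup (Int.castRingHom ℂ) hsymp
  rw [← moebiusNum_map_submatrix, ← moebiusDenom_map_submatrix]
  exact ⟨isUnit_moebiusDenom hsympℂ (map_intCast_map_star _) hτ,
    moebius_mem_siegelUpperHalfSpace hsympℂ (map_intCast_map_star _) hτ, hΨ τ hτ⟩

end TwoLoop
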